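/- Let c > 1 be a real number, define g(p) = p(1−p)·( log 2 + log p − log(1/c + p) ) for p ∈ (0,1), and define H : ℝ → ℝ by H(x) = g( 1 / (e^x + c − 1) ). Then H(0) = 0, H is twice differentiable at 0, H'(0) = (1−c) / (2c^3), and H''(0) = (−9 + 7c − 2c^2) / (4c^4). -/

import Mathlib

/-!
The proof is the chain rule applied twice to `H = g ∘ p`, where `p(x) = 1 / (e^x + c − 1)`.
Since `c > 1`, the denominator is positive for every real `x`, so `p` is positive and everything
is differentiable on all of `ℝ`; in particular `deriv (H c)` has a closed form everywhere.
At `x = 0` one has `p = 1/c`, where the logarithmic factor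
`log 2 + log p − log (1/c + p)` vanishes, and the values reduce to rational functions of `c`.
-/

open Filter Finset

/-- The function `g(p) = p(1−p)(log 2 + log p − log(1/c + p))` from Appendix D of the paper. -/
noncomputable def g (c p : ℝ) : ℝ :=
  p * (1 - p) * (Real.log 2 + Real.log p - Real.log (1 / c + p))

/-- The off-diagonal case `k ≠ l`: `H(x) = g(1 / (e^x + c − 1))`, where
`1/(e^x + c − 1)` is the softmax prediction of coordinate `k` after perturbing the weight
`w_{(t,l)}` with `l ≠ k`. -/
noncomputable def H (c x : ℝ) : ℝ :=
  g c (1 / (Real.exp x + c - 1))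

/-- The logarithmic factor of `g` vanishes at `p = 1/c`. -/
lemma log_factor_zero {c : ℝ} (hc : 0 < c) :
    Real.log 2 + Real.log (1 / c) - Real.log (1 / c + 1 / c) = 0 := by
  rw [← Real.log_mul two_ne_zero (by positivity), two_mul, sub_self]

lemma hasDerivAt_log_factor {c p : ℝ} (hc : 0 < c) (hp : 0 < p) :
    HasDerivAt (fun q => Real.log 2 + Real.log q - Real.log (1 / c + q))
      (1 / p - 1 / (1 / c + p)) p := by
  have h1 : HasDerivAt (fun q : ℝ => 1 / c + q) 1 p := (hasDerivAt_id p).const_add _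
  simpa using ((Real.hasDerivAt_log hp.ne').const_add (Real.log 2)).fun_sub
    (h1.log (by positivity))

/-- The derivative of `g c` on `p > 0`. -/
noncomputable def gDeriv (c p : ℝ) : ℝ :=
  (1 - 2 * p) * (Real.log 2 + Real.log p - Real.log (1 / c + p)) +
    p * (1 - p) * (1 / p - 1 / (1 / c + p))

lemma hasDerivAt_quad (p : ℝ) : HasDerivAt (fun q : ℝ => q * (1 - q)) (1 - 2 * p) p := by
  refine ((hasDerivAt_id' p).mul ((hasDerivAt_id' p).const_sub 1)).congr_deriv ?_
  ring

lemma hasDerivAt_g {c p : ℝ} (hc : 0 < c) (hp : 0 < p) :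
    HasDerivAt (g c) (gDeriv c p) p :=
  (hasDerivAt_quad p).mul (hasDerivAt_log_factor hc hp)

lemma hasDerivAt_gDeriv {c : ℝ} (hc : 0 < c) :
    HasDerivAt (gDeriv c) ((c - 5) / 4) (1 / c) := by
  have hp : 0 < 1 / c := by positivity
  have h1 : HasDerivAt (fun q : ℝ => 1 - 2 * q) (-2) (1 / c) := by
    simpa using ((hasDerivAt_id' (1 / c)).const_mul 2).const_sub 1
  have h2 : HasDerivAt (fun q : ℝ => 1 / c + q) 1 (1 / c) := (hasDerivAt_id _).const_add _
  have h3 : HasDerivAt (fun q : ℝ => 1 / q - 1 / (1 / c + q))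
      (-1 / (1 / c) ^ 2 - -1 / (1 / c + 1 / c) ^ 2) (1 / c) := by
    simpa only [one_div] using (hasDerivAt_id' (1 / c)).fun_inv hp.ne' |>.fun_sub
      (h2.fun_inv (by positivity))
  refine ((h1.mul (hasDerivAt_log_factor hc hp)).add
    ((hasDerivAt_quad (1 / c)).mul h3)).congr_deriv ?_
  rw [log_factor_zero hc]
  field_simp
  ring

lemma denom_pos {c : ℝ} (hc : 1 < c) (x : ℝ) : 0 < Real.exp x + c - 1 := by
  linarith [Real.exp_pos x]

lemma hasDerivAt_denom (c x : ℝ) :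
    HasDerivAt (fun y => Real.exp y + c - 1) (Real.exp x) x :=
  ((Real.hasDerivAt_exp x).add_const c).sub_const 1

lemma hasDerivAt_softmax {c : ℝ} (hc : 1 < c) (x : ℝ) :
    HasDerivAt (fun y => 1 / (Real.exp y + c - 1))
      (-Real.exp x / (Real.exp x + c - 1) ^ 2) x := by
  simpa only [one_div] using (hasDerivAt_denom c x).fun_inv (denom_pos hc x).ne'

lemma hasDerivAt_H {c : ℝ} (hc : 1 < c) (x : ℝ) :
    HasDerivAt (H c) (gDeriv c (1 / (Real.exp x + c - 1)) *
      (-Real.exp x / (Real.exp x + c - 1) ^ 2)) x :=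
  (hasDerivAt_g (by linarith) (one_div_pos.2 (denom_pos hc x))).comp x
    (hasDerivAt_softmax hc x)

/-- For real `c > 1`: `H(0) = 0`, `H` is twice differentiable at `0`,
`H'(0) = (1−c)/(2c³)`, and `H''(0) = (−9 + 7c − 2c²)/(4c⁴)`. -/
theorem stmt14 (c : ℝ) (hc : 1 < c) :
    H c 0 = 0 ∧ HasDerivAt (H c) ((1 - c) / (2 * c ^ 3)) 0 ∧
      HasDerivAt (deriv (H c)) ((-9 + 7 * c - 2 * c ^ 2) / (4 * c ^ 4)) 0 := by
  have hc0 : 0 < c := by linarith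
  have hD : Real.exp 0 + c - 1 = c := by simp
  have hg : gDeriv c (1 / c) = (c - 1) / (2 * c) := by
    rw [gDeriv, log_factor_zero hc0]
    field_simp
    ring
  refine ⟨?_, ?_, ?_⟩
  · rw [H, hD, g, log_factor_zero hc0, mul_zero]
  · refine (hasDerivAt_H hc 0).congr_deriv ?_
    rw [hD, hg, Real.exp_zero]
    field_simp
    ring
  · rw [show deriv (H c) = _ from funext fun x => (hasDerivAt_H hc x).deriv]
    have h1 : HasDerivAt (fun x => gDeriv c (1 / (Real.exp x + c - 1)))
        ((c - 5) / 4 * (-Real.exp 0 / (Real.exp 0 + c - 1) ^ 2)) 0 := by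
      refine HasDerivAt.comp (h₂ := gDeriv c) 0 ?_ (hasDerivAt_softmax hc 0)
      rw [hD]
      exact hasDerivAt_gDeriv hc0
    have h2 := (Real.hasDerivAt_exp 0).fun_neg.fun_div ((hasDerivAt_denom c 0).fun_pow 2)
      (pow_pos (denom_pos hc 0) 2).ne'
    refine (h1.fun_mul h2).congr_deriv ?_
    rw [hD, hg, Real.exp_zero]
    field_simp
    ring
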